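/- arXiv:2604.03152 — 7 statements merged into one kernel-verified Lean document; each statement's English description precedes it below -/
import Mathlib

section
/- Let β > 1, let U be a finite universe of n ≥ 1 elements and F a finite family of subsets of U. Suppose each element e ∈ U is assigned to a set asn(e) ∈ F containing it, and for s ∈ F let cov(s) = {e ∈ U : asn(e) = s}. Suppose each set s with cov(s) ≠ ∅ is placed at an integer level lev(s) ∈ [0, ⌈log_β n⌉], and each e ∈ cov(s) is given level lev(e) = lev(s). Assume: (1) for every s ∈ F with cov(s) ≠ ∅, |cov(s)| ≥ β^{lev(s)}; and (2) for every s ∈ F and every natural number j ≤ log_β n, |{e ∈ s : lev(e) < j}| < β^j. Then C = {s ∈ F : cov(s) ≠ ∅} is a set cover of U, and for every subfamily {s_1, …, s_k} ⊆ F that covers U, |C| ≤ β·(ln n + 1)·k. -/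
/-- If each weight times the number of elements of `s` ranked no higher is at most `b`, the total
weight of `s` is at most `b` times a harmonic number. -/
theorem sum_le_mul_harmonic_of_rank {α : Type*} [DecidableEq α] {b : ℝ} {w : α → ℝ} {f : α → ℕ}
    (hw : ∀ e, 0 ≤ w e) (s : Finset α)
    (h : ∀ e ∈ s, w e * ((s.filter (fun x => f x ≤ f e)).card : ℝ) ≤ b) :
    ∑ e ∈ s, w e ≤ b * (harmonic s.card : ℝ) := by
  induction s using Finset.induction_on_max_value f with
  | empty => simp
  | insert a s ha hmax ih =>
    have hrest : ∑ e ∈ s, w e ≤ b * (harmonic s.card : ℝ) := by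
      refine ih fun e he => le_trans ?_ (h e (Finset.mem_insert_of_mem he))
      have hsub : s.filter (fun x => f x ≤ f e) ⊆ (insert a s).filter (fun x => f x ≤ f e) :=
        Finset.filter_subset_filter _ (Finset.subset_insert a s)
      have hcard : ((s.filter (fun x => f x ≤ f e)).card : ℝ) ≤
          (((insert a s).filter (fun x => f x ≤ f e)).card : ℝ) := by
        exact_mod_cast Finset.card_le_card hsub
      exact mul_le_mul_of_nonneg_left hcard (hw e)
    have hlast := h a (Finset.mem_insert_self a s)
    have hall : (insert a s).filter (fun x => f x ≤ f a) = insert a s := by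
      refine Finset.filter_true_of_mem fun x hx => ?_
      rcases Finset.mem_insert.1 hx with rfl | hx
      · exact le_rfl
      · exact hmax x hx
    rw [hall, Finset.card_insert_of_notMem ha] at hlast
    rw [Finset.sum_insert ha, Finset.card_insert_of_notMem ha, harmonic_succ]
    push_cast at hlast ⊢
    have hpos : (0 : ℝ) < (s.card : ℝ) + 1 := by positivity
    have hwa : w a ≤ b * ((s.card : ℝ) + 1)⁻¹ := by
      rw [← div_eq_mul_inv, le_div_iff₀ hpos]
      exact hlast
    linarith

/-- Giving each element the reciprocal size of its fiber counts the nonempty fibers. -/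
theorem sum_inv_card_fiber {α γ : Type*} [DecidableEq γ] (U : Finset α) (g : α → γ) :
    ∑ e ∈ U, (((U.filter (fun x => g x = g e)).card : ℝ))⁻¹ = ((U.image g).card : ℝ) := by
  rw [← Finset.sum_fiberwise_of_maps_to (fun e he => Finset.mem_image_of_mem g he),
    Finset.card_eq_sum_ones, Nat.cast_sum]
  refine Finset.sum_congr rfl fun c hc => ?_
  obtain ⟨e, he, rfl⟩ := Finset.mem_image.1 hc
  have hne : ((U.filter (fun x => g x = g e)).card : ℝ) ≠ 0 :=
    Nat.cast_ne_zero.2 (Finset.card_ne_zero_of_mem (Finset.mem_filter.2 ⟨he, rfl⟩))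
  rw [Finset.sum_congr rfl (g := fun _ => ((U.filter (fun x => g x = g e)).card : ℝ)⁻¹)
    fun x hx => by rw [(Finset.mem_filter.1 hx).2]]
  simp [hne]

/-- A nonnegative sum over `U` is at most its sum over the members of a cover of `U`. -/
theorem sum_le_sum_cover {α : Type*} [DecidableEq α] {w : α → ℝ} (hw : ∀ e, 0 ≤ w e)
    {U : Finset α} {D : Finset (Finset α)} (hD : ∀ e ∈ U, ∃ s ∈ D, e ∈ s) :
    ∑ e ∈ U, w e ≤ ∑ s ∈ D, ∑ e ∈ s, w e := by
  calc ∑ e ∈ U, w e ≤ ∑ e ∈ D.biUnion id, w e :=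
        Finset.sum_le_sum_of_subset_of_nonneg
          (fun e he => Finset.mem_biUnion.2 (hD e he)) fun e _ _ => hw e
    _ ≤ ∑ x ∈ D.sigma id, w x.2 := by
        have himage : D.biUnion id = (D.sigma id).image fun x => x.2 := by
          ext e; simp
        rw [himage]
        exact Finset.sum_image_le_of_nonneg fun e _ => hw e
    _ = ∑ s ∈ D, ∑ e ∈ s, w e := Finset.sum_sigma _ _ _

/-- Let `β > 1`, let `U` be a finite universe of `n ≥ 1` elements and `F`
a finite family of subsets of `U`. Each element `e ∈ U` is assigned to a set `asn e ∈ F`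
containing it, and `cov s = {e ∈ U : asn e = s}`. Each set `s` with `cov s ≠ ∅` is placed
at an integer level `lev s ∈ [0, ⌈log_β n⌉]` and each `e ∈ cov s` has `lev e = lev s`
(i.e. `lev (asn e)`). Assuming (1) `|cov s| ≥ β ^ lev s` for every `s` with nonempty `cov`,
and (2) `|{e ∈ s : lev e < j}| < β ^ j` for every `s ∈ F` and every natural `j ≤ log_β n`,
the collection `C = {s ∈ F : cov s ≠ ∅}` is a set cover of `U`, and for every subfamily of
`F` covering `U` of size `k`, `|C| ≤ β·(ln n + 1)·k`. -/
theorem stmt_0 {α : Type*} [DecidableEq α] (β : ℝ) (hβ : 1 < β)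
    (U : Finset α) (F : Finset (Finset α)) (hn : 1 ≤ U.card)
    (hF : ∀ s ∈ F, s ⊆ U)
    (asn : α → Finset α)
    (hasn_mem : ∀ e ∈ U, asn e ∈ F) (hasn_in : ∀ e ∈ U, e ∈ asn e)
    (lev : Finset α → ℕ)
    (hlev_ub : ∀ s ∈ F, (U.filter (fun e => asn e = s)).Nonempty →
      lev s ≤ ⌈Real.logb β (U.card : ℝ)⌉₊)
    (h1 : ∀ s ∈ F, (U.filter (fun e => asn e = s)).Nonempty →
      β ^ (lev s) ≤ ((U.filter (fun e => asn e = s)).card : ℝ))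
    (h2 : ∀ s ∈ F, ∀ j : ℕ, (j : ℝ) ≤ Real.logb β (U.card : ℝ) →
      ((s.filter (fun e => lev (asn e) < j)).card : ℝ) < β ^ j)
    (C : Finset (Finset α))
    (hC : C = F.filter (fun s => (U.filter (fun e => asn e = s)).Nonempty)) :
    (C ⊆ F ∧ ∀ e ∈ U, ∃ s ∈ C, e ∈ s) ∧
    (∀ C' : Finset (Finset α), C' ⊆ F → (∀ e ∈ U, ∃ s ∈ C', e ∈ s) →
      (C.card : ℝ) ≤ β * (Real.log (U.card : ℝ) + 1) * C'.card) := by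
  have hCimage : C = U.image asn := by
    rw [hC]
    ext s
    simp only [Finset.mem_filter, Finset.mem_image, Finset.Nonempty]
    constructor
    · rintro ⟨_, e, he⟩
      exact ⟨e, he⟩
    · rintro ⟨e, he, rfl⟩
      exact ⟨hasn_mem e he, e, he, rfl⟩
  refine ⟨⟨hC ▸ Finset.filter_subset _ _, fun e he =>
    ⟨asn e, hCimage ▸ Finset.mem_image_of_mem asn he, hasn_in e he⟩⟩, fun C' hC' hcover => ?_⟩
  have hβ0 : 0 < β := by linarith
  have hn0 : (0 : ℝ) < U.card := by exact_mod_cast hn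
  set w : α → ℝ := fun e => (((U.filter (fun x => asn x = asn e)).card : ℝ))⁻¹ with hw_def
  have hw : ∀ e, 0 ≤ w e := fun e => by positivity
  have hset : ∀ s ∈ C', ∑ e ∈ s, w e ≤ β * (Real.log (U.card : ℝ) + 1) := by
    intro s hs
    have hsU := hF s (hC' hs)
    have hrank : ∀ e ∈ s,
        w e * ((s.filter (fun x => lev (asn x) ≤ lev (asn e))).card : ℝ) ≤ β := by
      intro e he
      have heU := hsU he
      have hcov := h1 (asn e) (hasn_mem e heU) ⟨e, Finset.mem_filter.2 ⟨heU, rfl⟩⟩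
      have hpow : 0 < β ^ lev (asn e) := by positivity
      have hcount : ((s.filter (fun x => lev (asn x) ≤ lev (asn e))).card : ℝ)
          ≤ β ^ (lev (asn e) + 1) := by
        by_cases hj : ((lev (asn e) + 1 : ℕ) : ℝ) ≤ Real.logb β (U.card : ℝ)
        · simpa only [Nat.lt_succ_iff] using (h2 s (hC' hs) _ hj).le
        · have hlt := (Real.logb_lt_iff_lt_rpow hβ hn0).1 (not_le.1 hj)
          rw [Real.rpow_natCast] at hlt
          refine le_trans ?_ hlt.le
          exact_mod_cast Finset.card_le_card ((Finset.filter_subset _ _).trans hsU)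
      rw [hw_def, inv_mul_le_iff₀ (hpow.trans_le hcov)]
      calc _ ≤ β ^ (lev (asn e) + 1) := hcount
        _ = β ^ lev (asn e) * β := pow_succ _ _
        _ ≤ _ := mul_le_mul_of_nonneg_right hcov hβ0.le
    refine (sum_le_mul_harmonic_of_rank (f := fun x => lev (asn x)) hw s hrank).trans ?_
    refine mul_le_mul_of_nonneg_left ?_ hβ0.le
    rcases s.eq_empty_or_nonempty with rfl | hne
    · have := Real.log_nonneg (Nat.one_le_cast.2 hn : (1 : ℝ) ≤ U.card)
      simp only [Finset.card_empty, harmonic_zero, Rat.cast_zero]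
      linarith
    · have hs0 : (0 : ℝ) < s.card := by exact_mod_cast hne.card_pos
      have hle : (s.card : ℝ) ≤ U.card := by exact_mod_cast Finset.card_le_card hsU
      linarith [harmonic_le_one_add_log s.card, Real.log_le_log hs0 hle]
  calc (C.card : ℝ) = ∑ e ∈ U, w e := by rw [hCimage, sum_inv_card_fiber U asn]
    _ ≤ ∑ s ∈ C', ∑ e ∈ s, w e := sum_le_sum_cover hw hcover
    _ ≤ C'.card • (β * (Real.log (U.card : ℝ) + 1)) := Finset.sum_le_card_nsmul _ _ _ hset
    _ = β * (Real.log (U.card : ℝ) + 1) * C'.card := by rw [nsmul_eq_mul, mul_comm]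
end

section
/- Let β > 1, let U be a finite universe of n ≥ 1 elements, let F be a finite family of subsets of U, and let lev assign a natural-number level lev(e) to each element e ∈ U such that for every s ∈ F and every natural number j ≤ log_β n one has |{e ∈ s : lev(e) < j}| < β^j. Fix s ∈ F with |s| = x and enumerate its elements e_1, e_2, …, e_x so that lev(e_1) ≥ lev(e_2) ≥ … ≥ lev(e_x). Then for every index j ∈ {1, …, x}, β^{-lev(e_j)} ≤ β/(x - j + 1). -/
/-- In a nonincreasing enumeration by level, the elements from index `j` on all have level
below `lev (e j) + 1`. -/
theorem card_sub_le_card_filter_lev_lt {α : Type*} (lev : α → ℕ) (s : Finset α)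
    (e : Fin s.card → α) (he : ∀ i, e i ∈ s) (hinj : Function.Injective e)
    (hsorted : ∀ i i' : Fin s.card, i ≤ i' → lev (e i') ≤ lev (e i)) (j : Fin s.card) :
    s.card - j ≤ (s.filter (fun a => lev a < lev (e j) + 1)).card := by
  rw [← Fin.card_Ici j]
  refine Finset.card_le_card_of_injOn e (fun i hi => ?_) hinj.injOn
  have hji : j ≤ i := by simpa using hi
  simpa [he i] using Nat.lt_succ_of_le (hsorted j i hji)

/-- Let `β > 1`, `U` a finite universe of `n ≥ 1` elements, `F` a finite
family of subsets of `U`, and `lev : α → ℕ` a level function such that for every `s ∈ F`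
and every natural `j ≤ log_β n`, `|{e ∈ s : lev e < j}| < β ^ j`. Fix `s ∈ F` with
`|s| = x` and enumerate its elements `e₀, …, e_{x-1}` (0-indexed) with
`lev (e 0) ≥ lev (e 1) ≥ …`. Then for every index `j`, `β ^ (-lev (e j)) ≤ β / (x - j)`
(with 0-indexing, `x - j` here equals the 1-indexed `x - j + 1`). -/
theorem stmt_1 {α : Type*} [DecidableEq α] (β : ℝ) (hβ : 1 < β)
    (U : Finset α) (F : Finset (Finset α)) (hn : 1 ≤ U.card)
    (hF : ∀ s ∈ F, s ⊆ U)
    (lev : α → ℕ)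
    (h2 : ∀ s ∈ F, ∀ j : ℕ, (j : ℝ) ≤ Real.logb β (U.card : ℝ) →
      ((s.filter (fun e => lev e < j)).card : ℝ) < β ^ j)
    (s : Finset α) (hs : s ∈ F)
    (e : Fin s.card → α) (he : ∀ i, e i ∈ s) (hinj : Function.Injective e)
    (hsorted : ∀ i i' : Fin s.card, i ≤ i' → lev (e i') ≤ lev (e i)) :
    ∀ j : Fin s.card, β ^ (-(lev (e j) : ℤ)) ≤ β / ((s.card : ℝ) - (j : ℕ)) := by
  intro j
  have hβ0 : 0 < β := zero_lt_one.trans hβ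
  have hjx : ((j : ℕ) : ℝ) < s.card := by exact_mod_cast j.isLt
  have key : (s.card : ℝ) - (j : ℕ) ≤ β ^ (lev (e j) + 1) := by
    by_cases hlog : ((lev (e j) + 1 : ℕ) : ℝ) ≤ Real.logb β (U.card : ℝ)
    · rw [← Nat.cast_sub j.isLt.le]
      exact (Nat.cast_le.mpr (card_sub_le_card_filter_lev_lt lev s e he hinj hsorted j)).trans
        (h2 s hs _ hlog).le
    · rw [not_le, Real.logb_lt_iff_lt_rpow hβ (by exact_mod_cast hn), Real.rpow_natCast] at hlog
      have hsU : (s.card : ℝ) ≤ U.card := by exact_mod_cast Finset.card_le_card (hF s hs)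
      have hj0 : (0 : ℝ) ≤ (j : ℕ) := Nat.cast_nonneg _
      linarith
  rw [zpow_neg, zpow_natCast, le_div_iff₀ (sub_pos.mpr hjx), inv_mul_le_iff₀ (pow_pos hβ0 _),
    ← pow_succ]
  exact key
end

section
/- Let β > 1, let U be a finite universe of n ≥ 1 elements, let F be a finite family of subsets of U, and let lev assign a natural-number level lev(e) to each element e ∈ U such that for every s ∈ F and every natural number j ≤ log_β n one has |{e ∈ s : lev(e) < j}| < β^j. Then for every s ∈ F, the sum Σ_{e ∈ s} β^{-lev(e)} is at most β·H_{|s|}, where H_x = 1 + 1/2 + … + 1/x is the x-th harmonic number; in particular Σ_{e ∈ s} β^{-lev(e)} ≤ β·(ln n + 1). -/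
/-- If every `e ∈ s` has at most `β ^ (lev e + 1)` elements of `s` at its level or below, then
`∑ e ∈ s, β ^ (-lev e)` is at most `β` times the harmonic number of `s.card`. -/
theorem sum_zpow_neg_level_le {α : Type*} [DecidableEq α] {β : ℝ} (hβ : 0 < β) (lev : α → ℕ)
    (s : Finset α)
    (h : ∀ e ∈ s, ((s.filter (fun x => lev x ≤ lev e)).card : ℝ) ≤ β ^ (lev e + 1)) :
    ∑ e ∈ s, β ^ (-(lev e : ℤ)) ≤ β * ∑ i ∈ Finset.range s.card, (1 : ℝ) / (i + 1) := by
  induction s using Finset.induction_on_max_value lev with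
  | empty => simp
  | insert a s ha hmax ih =>
    have hs : ∀ e ∈ s, ((s.filter (fun x => lev x ≤ lev e)).card : ℝ) ≤ β ^ (lev e + 1) := by
      intro e he
      refine le_trans ?_ (h e (Finset.mem_insert_of_mem he))
      exact_mod_cast Finset.card_le_card
        (Finset.filter_subset_filter _ (Finset.subset_insert a s))
    have hcard : (s.card : ℝ) + 1 ≤ β ^ (lev a + 1) := by
      have hall : (insert a s).filter (fun x => lev x ≤ lev a) = insert a s := by
        rw [Finset.filter_eq_self]
        simpa using hmax
      have := h a (Finset.mem_insert_self a s)
      rw [hall, Finset.card_insert_of_notMem ha] at this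
      exact_mod_cast this
    have hterm : β ^ (-(lev a : ℤ)) ≤ β * (1 / ((s.card : ℝ) + 1)) := by
      rw [zpow_neg, zpow_natCast, mul_one_div, le_div_iff₀ (by positivity),
        inv_mul_le_iff₀ (by positivity), ← pow_succ]
      exact hcard
    rw [Finset.sum_insert ha, Finset.card_insert_of_notMem ha, Finset.sum_range_succ, mul_add,
      add_comm]
    exact add_le_add (ih hs) hterm

/-- Let `β > 1`, `U` a finite universe of `n ≥ 1` elements, `F` a finite
family of subsets of `U`, and `lev : α → ℕ` a level function such that for every `s ∈ F`
and every natural `j ≤ log_β n`, `|{e ∈ s : lev e < j}| < β ^ j`. Then for every `s ∈ F`,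
`∑_{e ∈ s} β ^ (-lev e) ≤ β · H_{|s|}`, where `H_x = ∑_{i=1}^{x} 1/i` is the `x`-th
harmonic number; in particular the sum is at most `β · (ln n + 1)`. -/
theorem stmt_2 {α : Type*} [DecidableEq α] (β : ℝ) (hβ : 1 < β)
    (U : Finset α) (F : Finset (Finset α)) (hn : 1 ≤ U.card)
    (hF : ∀ s ∈ F, s ⊆ U)
    (lev : α → ℕ)
    (h2 : ∀ s ∈ F, ∀ j : ℕ, (j : ℝ) ≤ Real.logb β (U.card : ℝ) →
      ((s.filter (fun e => lev e < j)).card : ℝ) < β ^ j) :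
    ∀ s ∈ F,
      (∑ e ∈ s, β ^ (-(lev e : ℤ)) ≤ β * ∑ i ∈ Finset.range s.card, (1 : ℝ) / (i + 1)) ∧
      (∑ e ∈ s, β ^ (-(lev e : ℤ)) ≤ β * (Real.log (U.card : ℝ) + 1)) := by
  intro s hs
  have hcard : s.card ≤ U.card := Finset.card_le_card (hF s hs)
  have hharm : ∑ e ∈ s, β ^ (-(lev e : ℤ)) ≤
      β * ∑ i ∈ Finset.range s.card, (1 : ℝ) / (i + 1) := by
    refine sum_zpow_neg_level_le (by linarith) lev s fun e _ => ?_
    rcases le_or_gt ((lev e + 1 : ℕ) : ℝ) (Real.logb β (U.card : ℝ)) with hj | hj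
    · simpa only [Nat.lt_succ_iff] using (h2 s hs (lev e + 1) hj).le
    · rw [Real.logb_lt_iff_lt_rpow hβ (by exact_mod_cast hn), Real.rpow_natCast] at hj
      refine le_trans ?_ hj.le
      exact_mod_cast (Finset.card_filter_le s _).trans hcard
  refine ⟨hharm, hharm.trans (mul_le_mul_of_nonneg_left ?_ (by linarith))⟩
  calc ∑ i ∈ Finset.range s.card, (1 : ℝ) / (i + 1)
      ≤ ∑ i ∈ Finset.range U.card, (1 : ℝ) / (i + 1) :=
        Finset.sum_le_sum_of_subset_of_nonneg (Finset.range_mono hcard)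
          fun i _ _ => by positivity
    _ = (harmonic U.card : ℝ) := by simp [harmonic]
    _ ≤ Real.log (U.card : ℝ) + 1 := by
        rw [add_comm]
        exact harmonic_le_one_add_log U.card
end

section
/- Let β > 1, let U be a finite universe of n ≥ 1 elements, let F be a finite family of subsets of U, and let lev assign a natural-number level lev(e) to each element e ∈ U such that for every s ∈ F and every natural number j ≤ log_β n one has |{e ∈ s : lev(e) < j}| < β^j. Then for every subfamily {s_1, …, s_k} ⊆ F whose union contains U, Σ_{e ∈ U} β^{-lev(e)} ≤ k·β·(ln n + 1). -/
/-- If the weight of each element, times the number of elements of rank at most its own,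
is bounded by `b`, then the total weight is at most `b` times a harmonic number. -/
theorem sum_le_mul_harmonic_of_card_mul_le {α ι : Type*} [LinearOrder ι]
    (lev : α → ι) (w : α → ℝ) (b : ℝ) (hw : ∀ e, 0 ≤ w e) (s : Finset α)
    (h : ∀ e ∈ s, ((s.filter (fun x => lev x ≤ lev e)).card : ℝ) * w e ≤ b) :
    ∑ e ∈ s, w e ≤ b * (harmonic s.card : ℝ) := by
  classical
  induction hm : s.card generalizing s with
  | zero => simp [Finset.card_eq_zero.mp hm]
  | succ m ih =>
    have hne : s.Nonempty := Finset.card_pos.mp (by omega)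
    obtain ⟨a, ha, hmax⟩ := s.exists_max_image lev hne
    have hrest : ∑ e ∈ s.erase a, w e ≤ b * (harmonic m : ℝ) := by
      refine ih (s.erase a) (fun e he => ?_) (by rw [Finset.card_erase_of_mem ha, hm]; rfl)
      refine le_trans ?_ (h e (Finset.mem_of_mem_erase he))
      refine mul_le_mul_of_nonneg_right ?_ (hw e)
      exact_mod_cast Finset.card_le_card
        (Finset.filter_subset_filter _ (Finset.erase_subset a s))
    have hlast : w a ≤ b * ((m : ℝ) + 1)⁻¹ := by
      have hall := h a ha
      rw [Finset.filter_true_of_mem hmax, hm] at hall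
      push_cast at hall
      rw [← div_eq_mul_inv, le_div_iff₀ (by positivity)]
      linarith
    rw [← Finset.sum_erase_add s w ha, harmonic_succ]
    push_cast
    linarith


/-- Let `β > 1`, `U` a finite universe of `n ≥ 1` elements, `F` a finite
family of subsets of `U`, and `lev : α → ℕ` a level function such that for every `s ∈ F`
and every natural `j ≤ log_β n`, `|{e ∈ s : lev e < j}| < β ^ j`. Then for every
subfamily of `F` of size `k` whose union contains `U`,
`∑_{e ∈ U} β ^ (-lev e) ≤ k · β · (ln n + 1)`. -/
theorem stmt_4 {α : Type*} [DecidableEq α] (β : ℝ) (hβ : 1 < β)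
    (U : Finset α) (F : Finset (Finset α)) (hn : 1 ≤ U.card)
    (hF : ∀ s ∈ F, s ⊆ U)
    (lev : α → ℕ)
    (h2 : ∀ s ∈ F, ∀ j : ℕ, (j : ℝ) ≤ Real.logb β (U.card : ℝ) →
      ((s.filter (fun e => lev e < j)).card : ℝ) < β ^ j) :
    ∀ C' : Finset (Finset α), C' ⊆ F → (∀ e ∈ U, ∃ s ∈ C', e ∈ s) →
      ∑ e ∈ U, β ^ (-(lev e : ℤ)) ≤ (C'.card : ℝ) * β * (Real.log (U.card : ℝ) + 1) := by
  intro C' hC' hcover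
  have hβ0 : 0 < β := by linarith
  have hn0 : (0 : ℝ) < U.card := by exact_mod_cast hn
  have hw : ∀ e, 0 ≤ β ^ (-(lev e : ℤ)) := fun e => by positivity
  have hlog : 0 ≤ Real.log (U.card : ℝ) := Real.log_natCast_nonneg _
  have hset : ∀ s ∈ C', ∑ e ∈ s, β ^ (-(lev e : ℤ)) ≤ β * (Real.log (U.card : ℝ) + 1) := by
    intro s hs
    have hsU := hF s (hC' hs)
    refine (sum_le_mul_harmonic_of_card_mul_le lev _ β hw s fun e _ => ?_).trans ?_
    · have hcard : ((s.filter (fun x => lev x ≤ lev e)).card : ℝ) ≤ β ^ (lev e + 1) := by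
        by_cases hj : ((lev e + 1 : ℕ) : ℝ) ≤ Real.logb β (U.card : ℝ)
        · simpa only [Nat.lt_succ_iff] using (h2 s (hC' hs) (lev e + 1) hj).le
        · have hlt := (Real.logb_lt_iff_lt_rpow hβ hn0).mp (not_le.mp hj)
          rw [Real.rpow_natCast] at hlt
          refine le_trans ?_ hlt.le
          exact_mod_cast Finset.card_le_card ((Finset.filter_subset _ s).trans hsU)
      refine (mul_le_mul_of_nonneg_right hcard (hw e)).trans_eq ?_
      rw [zpow_neg, zpow_natCast, pow_succ]
      field_simp
    · refine mul_le_mul_of_nonneg_left ?_ hβ0.le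
      refine (harmonic_le_one_add_log s.card).trans ?_
      rcases s.eq_empty_or_nonempty with rfl | hne
      · simpa using hlog
      · have hpos : (0 : ℝ) < s.card := by exact_mod_cast hne.card_pos
        have hle : (s.card : ℝ) ≤ U.card := by exact_mod_cast Finset.card_le_card hsU
        linarith [Real.log_le_log hpos hle]
  calc ∑ e ∈ U, β ^ (-(lev e : ℤ))
      ≤ ∑ e ∈ U, ∑ s ∈ C' with e ∈ s, β ^ (-(lev e : ℤ)) := by
        refine Finset.sum_le_sum fun e he => ?_
        obtain ⟨s, hs, hes⟩ := hcover e he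
        exact Finset.single_le_sum (f := fun _ => β ^ (-(lev e : ℤ))) (fun _ _ => hw e)
          (Finset.mem_filter.mpr ⟨hs, hes⟩)
    _ = ∑ s ∈ C', ∑ e ∈ s, β ^ (-(lev e : ℤ)) := by
        refine Finset.sum_comm' fun e s => ?_
        rw [Finset.mem_filter]
        exact ⟨fun h => ⟨h.2.2, h.2.1⟩, fun h => ⟨hF s (hC' h.2) h.1, h.2, h.1⟩⟩
    _ ≤ ∑ _s ∈ C', β * (Real.log (U.card : ℝ) + 1) := Finset.sum_le_sum hset
    _ = (C'.card : ℝ) * β * (Real.log (U.card : ℝ) + 1) := by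
        rw [Finset.sum_const, nsmul_eq_mul, mul_assoc]
end

section
/- Let β > 1, let U be a finite universe of n ≥ 1 elements, let F be a finite family of subsets of U, and let lev assign a natural-number level lev(e) to each element e ∈ U such that for every s ∈ F and every natural number j ≤ log_β n one has |{e ∈ s : lev(e) < j}| < β^{j+1}. Fix s ∈ F with |s| = x and enumerate its elements e_1, …, e_x so that lev(e_1) ≥ lev(e_2) ≥ … ≥ lev(e_x). Then for every index j ∈ {1, …, x}, β^{-lev(e_j)} ≤ β²/(x - j + 1). -/
/-- Let `β > 1`, `U` a finite universe of `n ≥ 1` elements, `F` a finite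
family of subsets of `U`, and `lev : α → ℕ` a level function such that for every `s ∈ F`
and every natural `j ≤ log_β n`, `|{e ∈ s : lev e < j}| < β ^ (j + 1)` (the relaxed
no-PD property). Fix `s ∈ F` with `|s| = x` and enumerate its elements `e₀, …, e_{x-1}`
(0-indexed) with levels non-increasing. Then for every index `j`,
`β ^ (-lev (e j)) ≤ β² / (x - j)` (with 0-indexing, `x - j` equals the 1-indexed
`x - j + 1`). -/
theorem stmt_8 {α : Type*} [DecidableEq α] (β : ℝ) (hβ : 1 < β)
    (U : Finset α) (F : Finset (Finset α)) (hn : 1 ≤ U.card)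
    (hF : ∀ s ∈ F, s ⊆ U)
    (lev : α → ℕ)
    (h2 : ∀ s ∈ F, ∀ j : ℕ, (j : ℝ) ≤ Real.logb β (U.card : ℝ) →
      ((s.filter (fun e => lev e < j)).card : ℝ) < β ^ (j + 1))
    (s : Finset α) (hs : s ∈ F)
    (e : Fin s.card → α) (he : ∀ i, e i ∈ s) (hinj : Function.Injective e)
    (hsorted : ∀ i i' : Fin s.card, i ≤ i' → lev (e i') ≤ lev (e i)) :
    ∀ j : Fin s.card, β ^ (-(lev (e j) : ℤ)) ≤ β ^ 2 / ((s.card : ℝ) - (j : ℕ)) := by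
  intro j
  have hβ0 : 0 < β := by linarith
  have hcount : s.card - (j : ℕ) ≤ (s.filter (fun a => lev a < lev (e j) + 1)).card := by
    rw [← Fin.card_Ici j]
    refine Finset.card_le_card_of_injOn e (fun i hi => ?_) hinj.injOn
    have hji : j ≤ i := by simpa using hi
    simpa [he i, Nat.lt_succ_iff] using hsorted j i hji
  have hbound : ((s.filter (fun a => lev a < lev (e j) + 1)).card : ℝ)
      ≤ β ^ (lev (e j) + 2) := by
    by_cases hlog : ((lev (e j) + 1 : ℕ) : ℝ) ≤ Real.logb β (U.card : ℝ)
    · exact (h2 s hs _ hlog).le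
    · have hU : (U.card : ℝ) < β ^ (lev (e j) + 1) := by
        rw [← Real.rpow_natCast]
        exact (Real.logb_lt_iff_lt_rpow hβ (by exact_mod_cast hn)).1 (not_le.1 hlog)
      have hsU : ((s.filter (fun a => lev a < lev (e j) + 1)).card : ℝ) ≤ U.card := by
        exact_mod_cast Finset.card_le_card ((Finset.filter_subset _ _).trans (hF s hs))
      exact hsU.trans (hU.le.trans (pow_le_pow_right₀ hβ.le (by omega)))
  have hj : ((j : ℕ) : ℝ) < s.card := by exact_mod_cast j.isLt
  have hx : (s.card : ℝ) - (j : ℕ) ≤ β ^ (lev (e j) + 2) := by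
    rw [← Nat.cast_sub j.isLt.le]
    exact (Nat.cast_le.2 hcount).trans hbound
  rw [le_div_iff₀ (sub_pos.2 hj), zpow_neg, zpow_natCast, inv_mul_le_iff₀ (by positivity),
    ← pow_add]
  exact hx
end

section
/- Let β > 1, let U be a finite universe of n ≥ 1 elements, let F be a finite family of subsets of U, and let lev assign a natural-number level lev(e) to each element e ∈ U such that for every s ∈ F and every natural number j ≤ log_β n one has |{e ∈ s : lev(e) < j}| < β^{j+1}. Then for every s ∈ F, Σ_{e ∈ s} β^{-lev(e)} ≤ β²·H_{|s|} ≤ β²·(ln n + 1), where H_x denotes the x-th harmonic number. -/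
/-- If every value `f a`, times the number of elements of `s` of value at least `f a`, is at most
`C`, then `∑ f` over `s` is at most `C` times the harmonic number of the size of `s`. -/
theorem sum_le_mul_harmonic_sum {α : Type*} [DecidableEq α] (f : α → ℝ) (C : ℝ) (s : Finset α)
    (h : ∀ a ∈ s, 0 ≤ f a)
    (hC : ∀ a ∈ s, f a * ((s.filter (fun e => f a ≤ f e)).card : ℝ) ≤ C) :
    ∑ e ∈ s, f e ≤ C * ∑ i ∈ Finset.range s.card, (1 : ℝ) / (i + 1) := by
  induction s using Finset.induction_on_min_value f with
  | empty => simp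
  | insert a s ha hmin ih =>
    have hlast : f a ≤ C * (1 / ((s.card : ℝ) + 1)) := by
      have hall : (insert a s).filter (fun e => f a ≤ f e) = insert a s :=
        Finset.filter_true_of_mem fun e he => by
          rcases Finset.mem_insert.mp he with rfl | he
          · exact le_rfl
          · exact hmin e he
      have hCa := hC a (Finset.mem_insert_self a s)
      rw [hall, Finset.card_insert_of_notMem ha] at hCa
      push_cast at hCa
      rwa [mul_one_div, le_div_iff₀ (by positivity)]
    have hrest := ih (fun b hb => h b (Finset.mem_insert_of_mem hb)) fun b hb =>
      le_trans (mul_le_mul_of_nonneg_left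
        (Nat.cast_le.mpr (Finset.card_le_card
          (Finset.filter_subset_filter _ (Finset.subset_insert a s))))
        (h b (Finset.mem_insert_of_mem hb))) (hC b (Finset.mem_insert_of_mem hb))
    rw [Finset.sum_insert ha, Finset.card_insert_of_notMem ha, Finset.sum_range_succ, mul_add]
    linarith

/-- The sum of `1 / (i + 1)` over `i < m` is at most `log n + 1` whenever `m ≤ n`. -/
theorem sum_range_one_div_le_log_add_one {m n : ℕ} (hmn : m ≤ n) :
    ∑ i ∈ Finset.range m, (1 : ℝ) / (i + 1) ≤ Real.log (n : ℝ) + 1 := by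
  have hle : ∑ i ∈ Finset.range m, (1 : ℝ) / (i + 1) ≤ ∑ i ∈ Finset.range n, (1 : ℝ) / (i + 1) :=
    Finset.sum_le_sum_of_subset_of_nonneg (Finset.range_mono hmn) fun i _ _ => by positivity
  have hlog := harmonic_le_one_add_log n
  simp only [harmonic, Rat.cast_sum, Rat.cast_inv, Rat.cast_natCast] at hlog
  push_cast at hlog
  simp only [one_div] at hle ⊢
  linarith

/-- Let `β > 1`, `U` a finite universe of `n ≥ 1` elements, `F` a finite
family of subsets of `U`, and `lev : α → ℕ` a level function such that for every `s ∈ F`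
and every natural `j ≤ log_β n`, `|{e ∈ s : lev e < j}| < β ^ (j + 1)` (the relaxed
no-PD property). Then for every `s ∈ F`,
`∑_{e ∈ s} β ^ (-lev e) ≤ β² · H_{|s|} ≤ β² · (ln n + 1)`, where `H_x` denotes the
`x`-th harmonic number. -/
theorem stmt_9 {α : Type*} [DecidableEq α] (β : ℝ) (hβ : 1 < β)
    (U : Finset α) (F : Finset (Finset α)) (hn : 1 ≤ U.card)
    (hF : ∀ s ∈ F, s ⊆ U)
    (lev : α → ℕ)
    (h2 : ∀ s ∈ F, ∀ j : ℕ, (j : ℝ) ≤ Real.logb β (U.card : ℝ) →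
      ((s.filter (fun e => lev e < j)).card : ℝ) < β ^ (j + 1)) :
    ∀ s ∈ F,
      (∑ e ∈ s, β ^ (-(lev e : ℤ)) ≤ β ^ 2 * ∑ i ∈ Finset.range s.card, (1 : ℝ) / (i + 1)) ∧
      (β ^ 2 * ∑ i ∈ Finset.range s.card, (1 : ℝ) / (i + 1)
        ≤ β ^ 2 * (Real.log (U.card : ℝ) + 1)) := by
  intro s hs
  have hcard : s.card ≤ U.card := Finset.card_le_card (hF s hs)
  have hβ0 : 0 < β := by linarith
  refine ⟨sum_le_mul_harmonic_sum _ _ _ (fun a _ => by positivity) fun a _ => ?_,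
    mul_le_mul_of_nonneg_left (sum_range_one_div_le_log_add_one hcard) (by positivity)⟩
  have hfilter : s.filter (fun e => β ^ (-(lev a : ℤ)) ≤ β ^ (-(lev e : ℤ)))
      = s.filter (fun e => lev e < lev a + 1) := by
    refine Finset.filter_congr fun e _ => ?_
    rw [zpow_le_zpow_iff_right₀ hβ]
    omega
  have hbound : ((s.filter (fun e => lev e < lev a + 1)).card : ℝ) ≤ β ^ (lev a + 2) := by
    rcases le_or_gt ((lev a + 1 : ℕ) : ℝ) (Real.logb β U.card) with hj | hj
    · exact (h2 s hs _ hj).le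
    · rw [Real.logb_lt_iff_lt_rpow hβ (by exact_mod_cast hn), Real.rpow_natCast] at hj
      calc ((s.filter (fun e => lev e < lev a + 1)).card : ℝ)
          ≤ U.card := by exact_mod_cast (Finset.card_filter_le _ _).trans hcard
        _ ≤ β ^ (lev a + 1) := hj.le
        _ ≤ β ^ (lev a + 2) := pow_le_pow_right₀ hβ.le (by omega)
  rw [hfilter, zpow_neg, zpow_natCast, inv_mul_le_iff₀ (by positivity), ← pow_add]
  exact hbound
end

section
/- Let 1 < β < 2, let U be a finite universe, let F be a finite family of subsets of U, let asn assign each element e ∈ U to a set asn(e) ∈ F containing it, with cov(s) = {e ∈ U : asn(e) = s}, and let each set s with cov(s) ≠ ∅ carry a natural-number level lev(s) ≥ 0, with lev(e) = lev(asn(e)) for each e ∈ U. Assume |cov(s)| ≥ β^{lev(s)} for every s with cov(s) ≠ ∅, let C = {s ∈ F : cov(s) ≠ ∅}, and let D ⊂ U with |D| ≤ (β - 1)·|C|. Then Σ_{e ∈ U \ D} β^{-lev(e)} ≥ (2 - β)·|C|. -/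
/-- Let `1 < β < 2`, `U` a finite universe, `F` a finite family of
subsets of `U`, `asn` an assignment of each `e ∈ U` to a set `asn e ∈ F` containing it,
with `cov s = {e ∈ U : asn e = s}`, and each set `s` with `cov s ≠ ∅` carrying a natural
level `lev s ≥ 0`, with `lev e = lev (asn e)`. Assume `|cov s| ≥ β ^ lev s` for every
`s` with `cov s ≠ ∅`, let `C = {s ∈ F : cov s ≠ ∅}`, and let `D ⊂ U` with
`|D| ≤ (β - 1)·|C|`. Then `∑_{e ∈ U \ D} β ^ (-lev e) ≥ (2 - β)·|C|`. -/
theorem stmt_11 {α : Type*} [DecidableEq α] (β : ℝ) (hβ : 1 < β) (hβ2 : β < 2)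
    (U : Finset α) (F : Finset (Finset α))
    (hF : ∀ s ∈ F, s ⊆ U)
    (asn : α → Finset α)
    (hasn_mem : ∀ e ∈ U, asn e ∈ F) (hasn_in : ∀ e ∈ U, e ∈ asn e)
    (lev : Finset α → ℕ)
    (h1 : ∀ s ∈ F, (U.filter (fun e => asn e = s)).Nonempty →
      β ^ (lev s) ≤ ((U.filter (fun e => asn e = s)).card : ℝ))
    (C : Finset (Finset α))
    (hC : C = F.filter (fun s => (U.filter (fun e => asn e = s)).Nonempty))
    (D : Finset α) (hD : D ⊂ U) (hDcard : (D.card : ℝ) ≤ (β - 1) * C.card) :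
    (2 - β) * C.card ≤ ∑ e ∈ U \ D, β ^ (-(lev (asn e) : ℤ)) := by
  have hmaps : ∀ e ∈ U, asn e ∈ C := fun e he => by
    rw [hC, Finset.mem_filter]
    exact ⟨hasn_mem e he, e, Finset.mem_filter.mpr ⟨he, rfl⟩⟩
  have hU : (C.card : ℝ) ≤ ∑ e ∈ U, β ^ (-(lev (asn e) : ℤ)) := by
    rw [← Finset.sum_fiberwise_of_maps_to hmaps, Finset.cast_card]
    refine Finset.sum_le_sum fun s hs => ?_
    rw [hC, Finset.mem_filter] at hs
    have hfiber : ∑ e ∈ U with asn e = s, β ^ (-(lev (asn e) : ℤ)) =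
        ∑ e ∈ U with asn e = s, (β ^ lev s)⁻¹ :=
      Finset.sum_congr rfl fun e he => by
        rw [(Finset.mem_filter.mp he).2, zpow_neg, zpow_natCast]
    rw [hfiber, Finset.sum_const, nsmul_eq_mul, ← div_eq_mul_inv, one_le_div (by positivity)]
    exact h1 s hs.1 hs.2
  have hDsum : ∑ e ∈ D, β ^ (-(lev (asn e) : ℤ)) ≤ D.card := by
    rw [Finset.cast_card]
    exact Finset.sum_le_sum fun e _ => zpow_le_one_of_nonpos₀ hβ.le (by simp)
  have hsplit := Finset.sum_sdiff (f := fun e => β ^ (-(lev (asn e) : ℤ))) hD.subset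
  linarith
end
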